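/- arXiv:1312.3507 — 2 statements merged into one kernel-verified Lean document; each statement's English description precedes it below -/
import Mathlib

section
/- Assume M̄ ≥ 2D. Let s ∈ T and suppose condition (D) holds at every index k ∈ {s−1, s, s+1, s+2, s+3}. Then τ(s) := inf{m > s : m ∈ T} satisfies τ(s) ≤ s + 3; that is, among the three indices s+1, s+2, s+3 at least one belongs to T. -/
/-!
Reflecting if necessary, let the sign change at `s` be from `1` to `-1`, so that the estimate was
below the signal at `s - 1`, and hence `y_s ≤ x_s + (D + M_{s-1}) δ`. If no sign change occurs at
`s + 1`, `s + 2`, the next three steps are downwards of sizes `M_s`, `M_s`, `a M_s` (times `δ`),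
while the signal drops by at most `3 D δ`. Since `M_{s-1} ≤ a M_s` and `M_s ≥ M̄ ≥ 2 D`,
`y_{s+3} - x_{s+3} ≤ (4 D + M_{s-1} - (2 + a) M_s) δ ≤ (4 D - 2 M_s) δ ≤ 0`,
and the sign must be `1` at `s + 3` unless there is equality; at equality the rule
`h_k = -h_{k-1}` flips the sign anyway.
-/

noncomputable section

/-- Membership in the set `T = {k ≥ 1 : h_{k-1} h_k < 0}` of sign-change indices. -/
def Tmem (h : ℤ → ℝ) (k : ℕ) : Prop := 1 ≤ k ∧ h ((k : ℤ) - 1) * h (k : ℤ) < 0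

/-- The modified adaptive delta modulation system: sequences `h_k` (binary symbols,
indexed by `ℤ` so that `h (-1) = 1` makes sense), `y_k` (estimates at sample points)
and `M_k` (step sizes), driven by the sampled signal `x (k δ)`. -/
structure ADM (δ a Mbar M₀ y₀ : ℝ) (x : ℝ → ℝ) where
  h : ℤ → ℝ
  y : ℕ → ℝ
  M : ℕ → ℝ
  h_init : h (-1) = 1
  h_lt : ∀ k : ℕ, y k < x (k * δ) → h (k : ℤ) = 1
  h_gt : ∀ k : ℕ, x (k * δ) < y k → h (k : ℤ) = -1
  h_eq : ∀ k : ℕ, y k = x (k * δ) → h (k : ℤ) = - h ((k : ℤ) - 1)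
  y_zero : y 0 = y₀
  y_rec : ∀ k : ℕ, y (k + 1) = y k + h (k : ℤ) * M k * δ
  M_zero : M 0 = M₀
  M_pos : ∀ k : ℕ, 0 < M k
  M_rec_T : ∀ k : ℕ, Tmem h k → M k = max (a⁻¹ * M (k - 1)) Mbar
  M_rec_prev : ∀ k : ℕ, 1 ≤ k → ¬ Tmem h k → Tmem h (k - 1) → M k = M (k - 1)
  M_rec_grow : ∀ k : ℕ, 1 ≤ k → ¬ Tmem h k → ¬ Tmem h (k - 1) → M k = a * M (k - 1)

/-- Condition (D) at index `k`: `sup_{t ∈ [t_k, t_{k+1}]} |x(t) − x(t_k)| ≤ D δ`. -/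
def condD (δ D : ℝ) (x : ℝ → ℝ) (k : ℕ) : Prop :=
  ∀ t ∈ Set.Icc ((k : ℝ) * δ) (((k : ℝ) + 1) * δ), |x t - x ((k : ℝ) * δ)| ≤ D * δ

/-- The symbol is always `±1`, and its value determines the (weak) side of the signal on which the
estimate lies. -/
lemma ADM.sign_cases {δ a Mbar M₀ y₀ : ℝ} {x : ℝ → ℝ} (S : ADM δ a Mbar M₀ y₀ x) (k : ℕ) :
    (S.h k = 1 ∧ S.y k ≤ x (k * δ)) ∨ (S.h k = -1 ∧ x (k * δ) ≤ S.y k) := by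
  induction k with
  | zero =>
    rcases lt_trichotomy (S.y 0) (x ((0 : ℕ) * δ)) with h | h | h
    · exact Or.inl ⟨S.h_lt 0 h, h.le⟩
    · refine Or.inr ⟨?_, h.ge⟩
      have h₀ := S.h_eq 0 h
      simpa [S.h_init] using h₀
    · exact Or.inr ⟨S.h_gt 0 h, h.le⟩
  | succ n ih =>
    rcases lt_trichotomy (S.y (n + 1)) (x ((n + 1 : ℕ) * δ)) with h | h | h
    · exact Or.inl ⟨S.h_lt _ h, h.le⟩
    · have h₀ := S.h_eq _ h
      have e : ((n + 1 : ℕ) : ℤ) - 1 = n := by push_cast; ring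
      rw [e] at h₀
      rcases ih with ⟨h₁, -⟩ | ⟨h₁, -⟩
      · exact Or.inr ⟨by rw [h₀, h₁], h.ge⟩
      · exact Or.inl ⟨by rw [h₀, h₁, neg_neg], h.le⟩
    · exact Or.inr ⟨S.h_gt _ h, h.le⟩

lemma Tmem_succ_iff (h : ℤ → ℝ) (n : ℕ) :
    Tmem h (n + 1) ↔ h (n : ℤ) * h ((n + 1 : ℕ) : ℤ) < 0 := by
  have e : ((n + 1 : ℕ) : ℤ) - 1 = n := by push_cast; ring
  simp only [Tmem, e, le_add_iff_nonneg_left, zero_le, true_and]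

lemma ADM.h_succ_of_not_Tmem {δ a Mbar M₀ y₀ : ℝ} {x : ℝ → ℝ} (S : ADM δ a Mbar M₀ y₀ x) (n : ℕ)
    (hn : ¬ Tmem S.h (n + 1)) : S.h ((n + 1 : ℕ) : ℤ) = S.h (n : ℤ) := by
  rw [Tmem_succ_iff] at hn
  rcases S.sign_cases n with ⟨h₁, -⟩ | ⟨h₁, -⟩ <;>
    rcases S.sign_cases (n + 1) with ⟨h₂, -⟩ | ⟨h₂, -⟩ <;>
    rw [h₁, h₂] at hn ⊢ <;> norm_num at hn

lemma condD.step {δ D : ℝ} {x : ℝ → ℝ} {k : ℕ} (hδ : 0 < δ) (h : condD δ D x k) :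
    |x ((k + 1 : ℕ) * δ) - x (k * δ)| ≤ D * δ := by
  refine h _ ⟨?_, ?_⟩ <;> push_cast <;> nlinarith

/-- if `M̄ ≥ 2D`, `s ∈ T`, and condition (D) holds at every index
`k ∈ {s−1, s, s+1, s+2, s+3}`, then `τ(s) = inf{m > s : m ∈ T} ≤ s + 3`; i.e.,
at least one of `s+1, s+2, s+3` belongs to `T`. -/
theorem stmt4 (δ a Mbar M₀ y₀ D : ℝ) (x : ℝ → ℝ)
    (hδ : 0 < δ) (ha : 1 < a) (ha2 : a ≤ 2) (hMbar : 0 < Mbar) (hM₀ : 0 < M₀)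
    (hD : 0 < D) (hMD : 2 * D ≤ Mbar)
    (S : ADM δ a Mbar M₀ y₀ x)
    (s : ℕ) (hs : Tmem S.h s)
    (hDcond : ∀ k : ℕ, s - 1 ≤ k → k ≤ s + 3 → condD δ D x k) :
    Tmem S.h (s + 1) ∨ Tmem S.h (s + 2) ∨ Tmem S.h (s + 3) := by
  obtain ⟨m, rfl⟩ : ∃ m, s = m + 1 := ⟨s - 1, by have := hs.1; omega⟩
  by_contra! hcon
  obtain ⟨n₁, n₂, n₃⟩ := hcon
  have e₁ := S.h_succ_of_not_Tmem (m + 1) n₁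
  have e₂ := S.h_succ_of_not_Tmem (m + 1 + 1) n₂
  have e₃ := S.h_succ_of_not_Tmem (m + 1 + 2) n₃
  have M₁ : S.M (m + 1) = max (a⁻¹ * S.M m) Mbar := S.M_rec_T _ hs
  have M₂ : S.M (m + 1 + 1) = S.M (m + 1) := S.M_rec_prev _ (by omega) n₁ hs
  have M₃ : S.M (m + 1 + 2) = a * S.M (m + 1 + 1) := S.M_rec_grow _ (by omega) n₂ n₁
  have hge : Mbar ≤ S.M (m + 1) := M₁ ▸ le_max_right _ _
  have hle : S.M m ≤ a * S.M (m + 1) := by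
    have : a⁻¹ * S.M m ≤ S.M (m + 1) := M₁ ▸ le_max_left _ _
    rwa [inv_mul_le_iff₀ (by linarith)] at this
  have y₁ := S.y_rec m
  have y₂ := S.y_rec (m + 1)
  have y₃ := S.y_rec (m + 1 + 1)
  have y₄ := S.y_rec (m + 1 + 2)
  have d₀ := abs_le.1 ((hDcond m (by omega) (by omega)).step hδ)
  have d₁ := abs_le.1 ((hDcond (m + 1) (by omega) (by omega)).step hδ)
  have d₂ := abs_le.1 ((hDcond (m + 1 + 1) (by omega) (by omega)).step hδ)
  have d₃ := abs_le.1 ((hDcond (m + 1 + 2) (by omega) (by omega)).step hδ)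
  -- A tie at `s + 3` would force a sign change there.
  have hne : S.y (m + 1 + 3) ≠ x ((m + 1 + 3 : ℕ) * δ) := by
    intro h
    have h₀ := S.h_eq _ h
    have e : ((m + 1 + 3 : ℕ) : ℤ) - 1 = ((m + 1 + 2 : ℕ) : ℤ) := by push_cast; ring
    rw [e] at h₀
    rcases S.sign_cases (m + 1 + 2) with ⟨h₁, -⟩ | ⟨h₁, -⟩ <;>
      norm_num [add_assoc] at h₀ e₃ h₁ <;> linarith
  have key : (4 * D + S.M m) * δ ≤ (2 + a) * S.M (m + 1) * δ :=
    mul_le_mul_of_nonneg_right (by linarith) hδ.le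
  rw [Tmem_succ_iff] at hs
  have c₀ := S.sign_cases m
  have c₁ := S.sign_cases (m + 1)
  have c₄ := S.sign_cases (m + 1 + 3)
  rw [M₂] at M₃ y₃
  rw [M₃] at y₄
  simp only [add_assoc, Nat.reduceAdd] at *
  rw [e₁] at e₂ y₃
  rw [e₂] at e₃ y₄
  rw [e₃] at c₄
  rcases c₀ with ⟨h₀, b₀⟩ | ⟨h₀, b₀⟩ <;> rcases c₁ with ⟨h₁, b₁⟩ | ⟨h₁, b₁⟩ <;>
    rw [h₀, h₁] at hs
  · norm_num at hs
  · rw [h₁] at y₂ y₃ y₄ c₄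
    rw [h₀] at y₁
    rcases c₄ with ⟨h₄, -⟩ | ⟨-, b₄⟩
    · norm_num at h₄
    · exact hne (le_antisymm (by linarith) b₄)
  · rw [h₁] at y₂ y₃ y₄ c₄
    rw [h₀] at y₁
    rcases c₄ with ⟨-, b₄⟩ | ⟨h₄, -⟩
    · exact hne (le_antisymm b₄ (by linarith))
    · norm_num at h₄
  · norm_num at hs
end
end

section
/- Assume M̄ ≥ 2D and that for some integer η ≥ 0 one has M_η = M̄ and |x(t_η) − y_η| ≤ (a M̄ + D) δ, and that condition (D) holds at every index k ≥ η. Then the symbol sequence after η contains no quadruple occurrence of the same symbol: for every m ≥ η, (h_{m+1}, h_{m+2}, h_{m+3}, h_{m+4}) ≠ (1,1,1,1) and (h_{m+1}, h_{m+2}, h_{m+3}, h_{m+4}) ≠ (−1,−1,−1,−1). -/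
/-!
Write `e k = x (k δ) - y k`, so `e (k+1) = e k + d - h k * M k * δ` with `|d| ≤ D δ`.

Call `k` a good start if `M k ≥ Mbar` and `|e k| ≤ (a M k + D) δ`. A good start cannot begin a run of
four equal symbols `ε` (`ADM.no_run_of_good_start`): along such a run `M (k+1) ≥ M k` and
`M (k+2) = a M (k+1)`, hence
`ε e (k+3) ≤ (a M k + D + 3 D - M k - M (k+1) - a M (k+1)) δ ≤ (4 D - 2 M k) δ ≤ 0`,
whereas two consecutive symbols `ε` force `ε e (k+3) > 0`.

The index `η` is a good start by hypothesis, and so is every sign change `k+1 > η`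
(`ADM.good_start_of_sign_change`): `e` has just crossed zero, so `|e (k+1)| ≤ (M k + D) δ`, and
`M k ≤ a M (k+1)`. A run of four symbols that starts after `η` either starts at a sign change or
extends to the left, so induction on the starting index excludes all of them.
-/

noncomputable section

namespace ADM

variable {δ a Mbar M₀ y₀ D : ℝ} {x : ℝ → ℝ}

lemma h_eq_one_or (S : ADM δ a Mbar M₀ y₀ x) (k : ℕ) : S.h k = 1 ∨ S.h k = -1 := by
  induction k with
  | zero =>
    rcases lt_trichotomy (S.y 0) (x ((0 : ℕ) * δ)) with h | h | h
    · exact Or.inl (S.h_lt 0 h)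
    · right
      have := S.h_eq 0 h
      simpa [S.h_init] using this
    · exact Or.inr (S.h_gt 0 h)
  | succ k ih =>
    rcases lt_trichotomy (S.y (k + 1)) (x ((k + 1 : ℕ) * δ)) with h | h | h
    · exact Or.inl (S.h_lt _ h)
    · have h1 := S.h_eq _ h
      have h2 : ((k + 1 : ℕ) : ℤ) - 1 = k := by push_cast; ring
      rw [h2] at h1
      rcases ih with h3 | h3
      · right; rw [h1, h3]
      · left; rw [h1, h3]; norm_num
    · exact Or.inr (S.h_gt _ h)

/-- The symbol `h k` is a weak sign of the error. -/
lemma error_nonneg (S : ADM δ a Mbar M₀ y₀ x) (k : ℕ) : 0 ≤ S.h k * (x (k * δ) - S.y k) := by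
  rcases lt_trichotomy (S.y k) (x (k * δ)) with h | h | h
  · rw [S.h_lt k h]; linarith
  · rw [h]; simp
  · rw [S.h_gt k h]; linarith

/-- A repeated symbol is a strict sign of the error, because a zero error flips the symbol. -/
lemma error_pos (S : ADM δ a Mbar M₀ y₀ x) (k : ℕ) (hk : S.h (k + 1 : ℕ) = S.h k) :
    0 < S.h (k + 1 : ℕ) * (x ((k + 1 : ℕ) * δ) - S.y (k + 1)) := by
  rcases lt_trichotomy (S.y (k + 1)) (x ((k + 1 : ℕ) * δ)) with h | h | h
  · rw [S.h_lt _ h]; linarith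
  · have h1 := S.h_eq _ h
    have h2 : ((k + 1 : ℕ) : ℤ) - 1 = k := by push_cast; ring
    rw [h2, hk] at h1
    rcases S.h_eq_one_or k with h3 | h3 <;> rw [h3] at h1 <;> norm_num at h1
  · rw [S.h_gt _ h]; linarith

lemma tmem_succ_iff (S : ADM δ a Mbar M₀ y₀ x) (k : ℕ) :
    Tmem S.h (k + 1) ↔ S.h (k + 1 : ℕ) ≠ S.h k := by
  have h2 : ((k + 1 : ℕ) : ℤ) - 1 = k := by push_cast; ring
  unfold Tmem
  rw [h2]
  rcases S.h_eq_one_or k with h3 | h3 <;> rcases S.h_eq_one_or (k + 1) with h4 | h4 <;>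
    rw [h3, h4] <;> norm_num

lemma abs_sample_sub_le (hδ : 0 < δ) {k : ℕ} (hk : condD δ D x k) :
    |x ((k + 1 : ℕ) * δ) - x (k * δ)| ≤ D * δ := by
  have := hk (((k : ℝ) + 1) * δ) ⟨by nlinarith, le_rfl⟩
  simpa using this

/-- One step of the signed error, for either sign `ε`. -/
lemma signed_error_succ_le (S : ADM δ a Mbar M₀ y₀ x) (hδ : 0 < δ) {k : ℕ} (hk : condD δ D x k)
    {ε : ℝ} (hε : ε = 1 ∨ ε = -1) :
    ε * (x ((k + 1 : ℕ) * δ) - S.y (k + 1)) ≤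
      ε * (x (k * δ) - S.y k) + D * δ - ε * S.h k * S.M k * δ := by
  have h1 := abs_le.1 (abs_sample_sub_le hδ hk)
  rw [S.y_rec k]
  rcases hε with rfl | rfl <;> linarith [h1.1, h1.2]

lemma no_run_of_good_start (S : ADM δ a Mbar M₀ y₀ x) (hδ : 0 < δ) (ha : 1 < a)
    (hMD : 2 * D ≤ Mbar) {k : ℕ} (hD : ∀ j, k ≤ j → condD δ D x j)
    (hM : Mbar ≤ S.M k) (he : |x (k * δ) - S.y k| ≤ (a * S.M k + D) * δ) :
    ¬ (S.h (k + 1 : ℕ) = S.h k ∧ S.h (k + 2 : ℕ) = S.h k ∧ S.h (k + 3 : ℕ) = S.h k) := by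
  rintro ⟨h1, h2, h3⟩
  have n1 : ¬ Tmem S.h (k + 1) := by rw [S.tmem_succ_iff]; simpa using h1
  have n2 : ¬ Tmem S.h (k + 2) := by
    rw [S.tmem_succ_iff (k + 1), not_not]; exact h2.trans h1.symm
  have hpos := S.M_pos k
  have M1 : S.M k ≤ S.M (k + 1) := by
    by_cases t : Tmem S.h k
    · exact (S.M_rec_prev (k + 1) (by omega) n1 t).ge
    · have := S.M_rec_grow (k + 1) (by omega) n1 t
      rw [this, Nat.add_sub_cancel]; nlinarith
  have M2 : S.M (k + 2) = a * S.M (k + 1) := S.M_rec_grow (k + 2) (by omega) n2 n1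
  have hε := S.h_eq_one_or k
  have hsq : S.h k * S.h k = 1 := by rcases hε with h | h <;> rw [h] <;> norm_num
  have e0 : S.h k * (x (k * δ) - S.y k) ≤ (a * S.M k + D) * δ := by
    have := abs_le.1 he
    rcases hε with h | h <;> rw [h] <;> linarith [this.1, this.2]
  have e1 := S.signed_error_succ_le hδ (hD k le_rfl) hε
  have e2 := S.signed_error_succ_le hδ (hD (k + 1) (by omega)) hε
  have e3 := S.signed_error_succ_le hδ (hD (k + 2) (by omega)) hε
  rw [hsq] at e1
  rw [h1, hsq] at e2
  rw [h2, hsq, M2] at e3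
  have p := S.error_pos (k + 2) (h3.trans h2.symm)
  rw [show S.h ((k + 2 + 1 : ℕ)) = S.h k from h3] at p
  have q : (a * S.M k + 4 * D - S.M k - S.M (k + 1) - a * S.M (k + 1)) * δ ≤ 0 := by
    apply mul_nonpos_of_nonpos_of_nonneg _ hδ.le
    have : a * S.M k ≤ a * S.M (k + 1) := mul_le_mul_of_nonneg_left M1 (by linarith)
    linarith
  linarith

lemma good_start_of_sign_change (S : ADM δ a Mbar M₀ y₀ x) (hδ : 0 < δ) (ha : 1 < a)
    {k : ℕ} (hD : condD δ D x k) (hk : S.h (k + 1 : ℕ) ≠ S.h k) :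
    Mbar ≤ S.M (k + 1) ∧
      |x ((k + 1 : ℕ) * δ) - S.y (k + 1)| ≤ (a * S.M (k + 1) + D) * δ := by
  have hM := S.M_rec_T (k + 1) ((S.tmem_succ_iff k).2 hk)
  rw [Nat.add_sub_cancel] at hM
  refine ⟨hM ▸ le_max_right _ _, ?_⟩
  have hle : S.M k ≤ a * S.M (k + 1) := by
    have : a⁻¹ * S.M k ≤ S.M (k + 1) := hM ▸ le_max_left _ _
    rwa [inv_mul_le_iff₀ (by linarith)] at this
  have hle' : S.M k * δ ≤ a * S.M (k + 1) * δ := mul_le_mul_of_nonneg_right hle hδ.le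
  have p0 := S.error_nonneg k
  have p1 := S.error_nonneg (k + 1)
  have e1 := S.signed_error_succ_le hδ hD (S.h_eq_one_or (k + 1))
  rcases S.h_eq_one_or k with h | h <;> rcases S.h_eq_one_or (k + 1) with h' | h' <;>
    rw [h'] at e1 p1 <;> rw [h] at e1 p0
  · exact absurd (h'.trans h.symm) hk
  · rw [abs_le]; constructor <;> linarith
  · rw [abs_le]; constructor <;> linarith
  · exact absurd (h'.trans h.symm) hk

lemma no_quadruple (S : ADM δ a Mbar M₀ y₀ x) (hδ : 0 < δ) (ha : 1 < a)
    (hMD : 2 * D ≤ Mbar) {η : ℕ} (hD : ∀ j, η ≤ j → condD δ D x j)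
    (hM : Mbar ≤ S.M η) (he : |x (η * δ) - S.y η| ≤ (a * S.M η + D) * δ)
    {k : ℕ} (hk : η ≤ k) :
    ¬ (S.h (k + 1 : ℕ) = S.h k ∧ S.h (k + 2 : ℕ) = S.h k ∧ S.h (k + 3 : ℕ) = S.h k) := by
  induction k, hk using Nat.le_induction with
  | base => exact S.no_run_of_good_start hδ ha hMD hD hM he
  | succ k hk ih =>
    by_cases hc : S.h (k + 1 : ℕ) = S.h k
    · rintro ⟨h1, h2, -⟩
      exact ih ⟨hc, h1.trans hc, h2.trans hc⟩
    · obtain ⟨g1, g2⟩ := S.good_start_of_sign_change hδ ha (hD k hk) hc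
      exact S.no_run_of_good_start hδ ha hMD (fun j hj => hD j (by omega)) g1 g2

end ADM

/-- under the hypotheses of Theorem 1 (iii), the symbol sequence after `η`
contains no quadruple occurrence of the same symbol: for all `m ≥ η`,
`(h_{m+1}, h_{m+2}, h_{m+3}, h_{m+4}) ≠ ±(1,1,1,1)`. -/
theorem stmt8 (δ a Mbar M₀ y₀ D : ℝ) (x : ℝ → ℝ)
    (hδ : 0 < δ) (ha : 1 < a) (ha2 : a ≤ 2) (hMbar : 0 < Mbar) (hM₀ : 0 < M₀)
    (hD : 0 < D) (hMD : 2 * D ≤ Mbar)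
    (S : ADM δ a Mbar M₀ y₀ x)
    (η : ℕ) (hMη : S.M η = Mbar)
    (hyη : |x (η * δ) - S.y η| ≤ (a * Mbar + D) * δ)
    (hDcond : ∀ k : ℕ, η ≤ k → condD δ D x k) :
    ∀ m : ℕ, η ≤ m →
      ¬ (S.h ((m : ℤ) + 1) = 1 ∧ S.h ((m : ℤ) + 2) = 1 ∧
          S.h ((m : ℤ) + 3) = 1 ∧ S.h ((m : ℤ) + 4) = 1) ∧
      ¬ (S.h ((m : ℤ) + 1) = -1 ∧ S.h ((m : ℤ) + 2) = -1 ∧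
          S.h ((m : ℤ) + 3) = -1 ∧ S.h ((m : ℤ) + 4) = -1) := by
  intro m hm
  have key := S.no_quadruple hδ ha hMD hDcond hMη.ge (by rwa [hMη]) (k := m + 1) (by omega)
  have c1 : ((m + 1 : ℕ) : ℤ) = m + 1 := by push_cast; ring
  have c2 : ((m + 1 + 1 : ℕ) : ℤ) = m + 2 := by push_cast; ring
  have c3 : ((m + 1 + 2 : ℕ) : ℤ) = m + 3 := by push_cast; ring
  have c4 : ((m + 1 + 3 : ℕ) : ℤ) = m + 4 := by push_cast; ring
  rw [c1, c2, c3, c4] at key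
  constructor <;> rintro ⟨h1, h2, h3, h4⟩ <;>
    exact key ⟨h2.trans h1.symm, h3.trans h1.symm, h4.trans h1.symm⟩
end
end
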